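/- Let a > 0, b > 0, c > 0 be real numbers with b > a, c > a and c ≥ max(3a + 1/2 − b, a + a/(2(b−a))), and suppose (b,c) is neither (a+1/2, 2a) nor (2a, a+1/2). Then for every x > 0, the generalized hypergeometric function Φ(x) = ₁F₂(a; b, c; −x²/4) = Σ_{k=0}^{∞} (a)_k / (k! (b)_k (c)_k) · (−x²/4)^k is strictly positive. -/

import Mathlib

/-- Pochhammer symbol `(a)_k = a (a+1) ⋯ (a+k-1)` for a real number `a`. -/
noncomputable def poch (a : ℝ) (k : ℕ) : ℝ := ∏ i ∈ Finset.range k, (a + i)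

/-- The generalized hypergeometric series `₁F₂(a; b, c; z)`. -/
noncomputable def oneF2 (a b c z : ℝ) : ℝ :=
  ∑' k : ℕ, poch a k / ((k.factorial : ℝ) * poch b k * poch c k) * z ^ k

/-!
Put `μ = b + c - a - 1/2`. Gasper's method expands `₁F₂(a; b, c; -y)` as
`∑ₙ cₙ yⁿ ₀F₁(; (μ + 1)/2 + n; -y/4)²`, a series of squares of Bessel functions, which do not all
vanish at a given `y`. Each coefficient `cₙ` is a positive multiple of a balanced terminating `₄F₃`
sum with alternating signs, and Whipple's transformation rewrites that sum in two different ways.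
If both `b` and `c` are less than `(μ + 1)/2`, one of the two forms has only nonnegative terms. If
`(μ + 1)/2 ≤ c`, the other form has nonnegative terms as well, unless `b < a + 1/2`; then exactly
one term is nonpositive, and a recurrence in `n` propagates positivity from the sum for `n = 1`,
which is nonnegative precisely when `a/2 ≤ (b - a)(c - a)`. The two excluded pairs `(b, c)` are
those for which all `cₙ` with `1 ≤ n` vanish.
-/

open Finset.HasAntidiagonal

/-- The binomial convolution `∑_{i + j = n} (n choose i) f i j`, in which all the finite
hypergeometric sums below are written. -/
def binomSum {R : Type*} [CommSemiring R] (f : ℕ → ℕ → R) (n : ℕ) : R :=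
  ∑ p ∈ antidiagonal n, (n.choose p.1 : R) * f p.1 p.2

namespace binomSum

section CommSemiring

variable {R : Type*} [CommSemiring R]

lemma congr {f g : ℕ → ℕ → R} {n : ℕ} (h : ∀ i j, i + j = n → f i j = g i j) :
    binomSum f n = binomSum g n :=
  Finset.sum_congr rfl fun p hp => by rw [h _ _ (mem_antidiagonal.mp hp)]

@[simp]
lemma zero (f : ℕ → ℕ → R) : binomSum f 0 = f 0 0 := by
  simp [binomSum]

lemma add (f g : ℕ → ℕ → R) (n : ℕ) :
    binomSum (fun i j => f i j + g i j) n = binomSum f n + binomSum g n := by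
  simp only [binomSum, mul_add, Finset.sum_add_distrib]

lemma const_mul (r : R) (f : ℕ → ℕ → R) (n : ℕ) :
    binomSum (fun i j => r * f i j) n = r * binomSum f n := by
  simp only [binomSum, Finset.mul_sum, mul_left_comm]

lemma swap (f : ℕ → ℕ → R) (n : ℕ) : binomSum (fun i j => f j i) n = binomSum f n := by
  rw [binomSum, binomSum, ← Finset.Nat.sum_antidiagonal_swap]
  refine Finset.sum_congr rfl fun p hp => ?_
  rw [Prod.fst_swap, Prod.snd_swap, Nat.choose_symm_of_eq_add
    ((mem_antidiagonal.mp hp).symm.trans (add_comm _ _))]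

lemma succ (f : ℕ → ℕ → R) (n : ℕ) :
    binomSum f (n + 1) = binomSum (fun i j => f i (j + 1) + f (i + 1) j) n := by
  rw [add, binomSum, Finset.sum_antidiagonal_choose_succ_mul]
  congr 1
  refine Finset.sum_congr rfl fun p hp => ?_
  rw [Nat.choose_symm_of_eq_add (mem_antidiagonal.mp hp).symm]

lemma fst_mul (f : ℕ → ℕ → R) (n : ℕ) :
    binomSum (fun i j => i * f i j) (n + 1) = (n + 1) * binomSum (fun i j => f (i + 1) j) n := by
  rw [binomSum, Finset.Nat.sum_antidiagonal_succ, binomSum, Finset.mul_sum]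
  simp only [Nat.cast_zero, zero_mul, mul_zero, zero_add]
  refine Finset.sum_congr rfl fun p _ => ?_
  have h := congrArg (Nat.cast (R := R)) (Nat.add_one_mul_choose_eq n p.1)
  push_cast at h ⊢
  rw [← mul_assoc, ← mul_assoc, h]

lemma snd_mul (f : ℕ → ℕ → R) (n : ℕ) :
    binomSum (fun i j => j * f i j) (n + 1) = (n + 1) * binomSum (fun i j => f i (j + 1)) n := by
  rw [← swap, fst_mul (fun i j => f j i), ← swap]

lemma snd_mul_shift_fst (f : ℕ → ℕ → R) (n : ℕ) :
    binomSum (fun i j => j * f (i + 1) j) n = binomSum (fun i j => i * f i (j + 1)) n := by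
  cases n with
  | zero => simp only [zero, Nat.cast_zero, zero_mul]
  | succ n => rw [snd_mul fun i j => f (i + 1) j, fst_mul fun i j => f i (j + 1)]

lemma assoc (f : ℕ → ℕ → ℕ → R) (n : ℕ) :
    binomSum (fun k l => binomSum (fun i j => f i j l) k) n =
      binomSum (fun i m => binomSum (fun j l => f i j l) m) n := by
  simp only [binomSum, Finset.mul_sum]
  rw [Finset.sum_sigma', Finset.sum_sigma']
  refine Finset.sum_nbij' (fun q => ⟨(q.2.1, q.2.2 + q.1.2), (q.2.2, q.1.2)⟩)
    (fun q => ⟨(q.1.1 + q.2.1, q.2.2), (q.1.1, q.2.1)⟩) ?_ ?_ ?_ ?_ ?_ <;>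
    rintro ⟨⟨k, l⟩, i, j⟩ hq <;>
    obtain ⟨rfl, rfl⟩ : k + l = n ∧ i + j = _ := by simpa using hq
  · simp [add_assoc]
  · simp [add_assoc]
  · simp
  · simp
  · have h := Nat.choose_mul (n := i + j + l) (k := i + j) (s := i) (by omega)
    rw [show i + j + l - i = j + l by omega, Nat.add_sub_cancel_left] at h
    have h' := congrArg (Nat.cast (R := R)) h
    push_cast at h'
    rw [← mul_assoc, ← mul_assoc, h']

lemma eq_zero {f : ℕ → ℕ → R} {n : ℕ} (h : ∀ i j, i + j = n → f i j = 0) :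
    binomSum f n = 0 :=
  Finset.sum_eq_zero fun _ hp => by rw [h _ _ (mem_antidiagonal.mp hp), mul_zero]

lemma eq_last {f : ℕ → ℕ → R} {n : ℕ} (h : ∀ i j, i + j = n → j ≠ 0 → f i j = 0) :
    binomSum f n = f n 0 := by
  rw [binomSum, Finset.sum_eq_single (n, 0), Nat.choose_self, Nat.cast_one, one_mul]
  · rintro ⟨i, j⟩ hij hne
    have hn := mem_antidiagonal.mp hij
    rw [h i j hn (by rintro rfl; exact hne (by rw [← hn, add_zero])), mul_zero]
  · exact fun h => absurd (mem_antidiagonal.mpr (add_zero n)) h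

end CommSemiring

lemma pos {f : ℕ → ℕ → ℝ} {n i j : ℕ} (hij : i + j = n) (hpos : 0 < f i j)
    (h : ∀ i j, i + j = n → 0 ≤ f i j) : 0 < binomSum f n :=
  Finset.sum_pos' (fun _ hp => mul_nonneg (Nat.cast_nonneg _) (h _ _ (mem_antidiagonal.mp hp)))
    ⟨(i, j), mem_antidiagonal.mpr hij,
      mul_pos (Nat.cast_pos.mpr (Nat.choose_pos (by omega))) hpos⟩

lemma abs_le {f : ℕ → ℕ → ℝ} {B : ℝ} {n : ℕ} (h : ∀ i j, i + j = n → |f i j| ≤ B) :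
    |binomSum f n| ≤ 2 ^ n * B := by
  induction n generalizing f B with
  | zero => rw [zero, pow_zero, one_mul]; exact h 0 0 rfl
  | succ n ih =>
    rw [succ, pow_succ, mul_assoc]
    refine ih fun i j hij => (abs_add_le _ _).trans ?_
    linarith [h i (j + 1) (by omega), h (i + 1) j (by omega)]

end binomSum

section Pochhammer

lemma poch_zero (x : ℝ) : poch x 0 = 1 := Finset.prod_range_zero _

lemma poch_succ (x : ℝ) (k : ℕ) : poch x (k + 1) = poch x k * (x + k) :=
  Finset.prod_range_succ _ _

lemma poch_one (x : ℝ) : poch x 1 = x := by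
  rw [poch_succ, poch_zero, Nat.cast_zero, add_zero, one_mul]

lemma poch_add (x : ℝ) (m k : ℕ) : poch x (m + k) = poch x m * poch (x + m) k := by
  simp only [poch, Finset.prod_range_add, Nat.cast_add, add_assoc]

lemma poch_succ_left (x : ℝ) (k : ℕ) : poch x (k + 1) = x * poch (x + 1) k := by
  rw [add_comm k, poch_add, poch_one, Nat.cast_one]

lemma poch_pos {x : ℝ} (hx : 0 < x) (k : ℕ) : 0 < poch x k :=
  Finset.prod_pos fun i _ => by positivity

lemma poch_nonneg {x : ℝ} (hx : 0 ≤ x) (k : ℕ) : 0 ≤ poch x k :=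
  Finset.prod_nonneg fun i _ => by positivity

lemma poch_ne_zero {x : ℝ} (hx : 0 < x) (k : ℕ) : poch x k ≠ 0 := (poch_pos hx k).ne'

lemma poch_neg {x : ℝ} (h₁ : -1 < x) (h₂ : x < 0) {k : ℕ} (hk : k ≠ 0) : poch x k < 0 := by
  obtain ⟨k, rfl⟩ := Nat.exists_eq_succ_of_ne_zero hk
  rw [poch_succ_left]
  exact mul_neg_of_neg_of_pos h₂ (poch_pos (by linarith) k)

lemma poch_le_poch {x y : ℝ} (hx : 0 ≤ x) (hxy : x ≤ y) (k : ℕ) : poch x k ≤ poch y k :=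
  Finset.prod_le_prod (fun i _ => by positivity) (fun i _ => by linarith)

lemma poch_mul_le {x L : ℝ} (hx : 0 ≤ x) (hL : 1 ≤ L) (k : ℕ) :
    poch (L * x) k ≤ L ^ k * poch x k := by
  induction k with
  | zero => simp only [poch_zero, pow_zero, mul_one, le_refl]
  | succ k ih =>
    have hstep : L * x + k ≤ L * (x + k) := by nlinarith [Nat.cast_nonneg (α := ℝ) k]
    calc poch (L * x) (k + 1) = poch (L * x) k * (L * x + k) := poch_succ _ _
      _ ≤ (L ^ k * poch x k) * (L * (x + k)) :=
        mul_le_mul ih hstep (by positivity) (mul_nonneg (by positivity) (poch_nonneg hx k))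
      _ = L ^ (k + 1) * poch x (k + 1) := by rw [poch_succ]; ring

lemma min_one_le_poch {x : ℝ} (hx : 0 < x) (k : ℕ) : min x 1 ≤ poch x k := by
  cases k with
  | zero => rw [poch_zero]; exact min_le_right x 1
  | succ k =>
    have hone : 1 ≤ poch (x + 1) k := Finset.one_le_prod fun i _ => by
      linarith [Nat.cast_nonneg (α := ℝ) i]
    rw [poch_succ_left]
    exact (min_le_left x 1).trans (le_mul_of_one_le_right hx.le hone)

lemma min_one_mul_poch_le {x : ℝ} (hx : 0 < x) {m n : ℕ} (hmn : m ≤ n) :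
    min x 1 * poch x m ≤ poch x n := by
  obtain ⟨k, rfl⟩ := Nat.exists_eq_add_of_le hmn
  have hmin : min x 1 ≤ poch (x + m) k :=
    (min_le_min_right 1 (le_add_of_nonneg_right m.cast_nonneg)).trans
      (min_one_le_poch (by positivity) k)
  rw [poch_add, mul_comm]
  exact mul_le_mul_of_nonneg_left hmin (poch_pos hx m).le

lemma neg_one_pow_mul_poch (x y : ℝ) (k : ℕ) (h : x + y + k = 1) :
    (-1) ^ k * poch x k = poch y k := by
  induction k generalizing x with
  | zero => rw [pow_zero, poch_zero, poch_zero, one_mul]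
  | succ k ih =>
    push_cast at h
    rw [poch_succ_left, poch_succ, ← ih (x + 1) (by linarith), show y + k = -x by linarith]
    ring

lemma poch_two_mul (x : ℝ) (k : ℕ) :
    poch (2 * x) (2 * k) = 4 ^ k * poch x k * poch (x + 1 / 2) k := by
  induction k with
  | zero => simp only [mul_zero, poch_zero, pow_zero, mul_one]
  | succ k ih =>
    rw [show 2 * (k + 1) = 2 * k + 1 + 1 by ring, poch_succ, poch_succ, ih, poch_succ, poch_succ]
    push_cast
    ring

end Pochhammer

section FiniteSums

lemma binomSum_vandermonde (x y : ℝ) (n : ℕ) :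
    binomSum (fun i j => poch x i * poch y j) n = poch (x + y) n := by
  induction n with
  | zero => simp only [binomSum.zero, poch_zero, mul_one]
  | succ n ih =>
    rw [binomSum.succ, poch_succ, ← ih, mul_comm, ← binomSum.const_mul]
    refine binomSum.congr fun i j hij => ?_
    rw [poch_succ, poch_succ, ← hij]
    push_cast
    ring

lemma binomSum_saalschutz (x y : ℝ) {z : ℝ} (hz : 0 < z) (n : ℕ) :
    binomSum (fun i j => poch x i * poch y i * poch (z - x - y) j / poch z i) n =
      poch (z - x) n * poch (z - y) n / poch z n := by
  set τ : ℕ → ℕ → ℝ := fun i j => poch x i * poch y i * poch (z - x - y) j / poch z i with hτ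
  induction n with
  | zero => simp only [binomSum.zero, hτ, poch_zero, mul_one]
  | succ n ih =>
    have hzn : z + n ≠ 0 := by positivity
    have hcontiguous : ∀ i j, i + j = n →
        (z + n) * (τ i (j + 1) + τ (i + 1) j) + i * τ i (j + 1) =
          (z - x + n) * (z - y + n) * τ i j + j * τ (i + 1) j := by
      intro i j hij
      have hzi : z + i ≠ 0 := by positivity
      have hz' := poch_ne_zero hz i
      simp only [hτ, poch_succ, ← hij]
      push_cast
      field_simp
      ring
    have hsum : (z + n) * binomSum τ (n + 1) = (z - x + n) * (z - y + n) * binomSum τ n := by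
      have h := binomSum.congr hcontiguous
      rw [binomSum.add, binomSum.add, binomSum.snd_mul_shift_fst, binomSum.const_mul,
        binomSum.const_mul, ← binomSum.succ] at h
      exact add_right_cancel h
    rw [← mul_right_inj' hzn, hsum, ih, poch_succ, poch_succ, poch_succ]
    have hz' := poch_ne_zero hz n
    field_simp

lemma binomSum_saalschutz_balanced (A : ℝ) {σ E F : ℝ} (hE : 0 < E) (hF : 0 < F) (n : ℕ)
    (hσ : E + F + n = A + σ + 1) :
    binomSum (fun i _ => (-1) ^ i * (poch A i * poch σ i / (poch E i * poch F i))) n =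
      poch (E - A) n * poch (F - A) n / (poch E n * poch F n) := by
  have hterm : ∀ i j, i + j = n →
      (-1) ^ i * (poch A i * poch σ i / (poch E i * poch F i)) =
        (-1) ^ n / poch F n * (poch A i * poch σ i * poch (E - A - σ) j / poch E i) := by
    intro i j hij
    have hreflect : (-1) ^ j * poch (E - A - σ) j = poch (F + i) j :=
      neg_one_pow_mul_poch _ _ _ (by rw [← hij] at hσ; push_cast at hσ; linarith)
    have hFij : poch F n = poch F i * poch (F + i) j := by rw [← hij, poch_add]
    have hEi := poch_ne_zero hE i
    have hFi := poch_ne_zero hF i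
    have hFj := poch_ne_zero (show 0 < F + i by positivity) j
    have hsign : ((-1) ^ j * (-1) ^ j : ℝ) = 1 := by rw [← mul_pow]; norm_num
    rw [hFij, ← hij, pow_add, ← hreflect]
    rw [← hreflect] at hFj
    have hj := right_ne_zero_of_mul hFj
    field_simp
  rw [binomSum.congr hterm, binomSum.const_mul, binomSum_saalschutz A σ hE,
    ← neg_one_pow_mul_poch (E - σ) (F - A) n (by linarith)]
  have hEn := poch_ne_zero hE n
  have hFn := poch_ne_zero hF n
  field_simp

/-- The general term of the positive sum into which Whipple's transformation turns a balanced
alternating `₄F₃` sum. -/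
noncomputable def whippleTerm (A X Y P Q D : ℝ) (i j : ℕ) : ℝ :=
  poch A i * poch X i * poch (Y + j) i * poch P j * poch Q j / poch D i

/-- Whipple's transformation. Expand `(B)ₖ(C)ₖ/(D)ₖ` by the Pfaff–Saalschütz formula, exchange the
two summations, and sum the inner one by the same formula. -/
lemma binomSum_whipple (A B : ℝ) {C D E F : ℝ} (hD : 0 < D) (hE : 0 < E) (hF : 0 < F) (n : ℕ)
    (hC : D + E + F + n = A + B + C + 1) :
    binomSum (fun k _ =>
        (-1) ^ k * (poch A k * poch B k * poch C k / (poch D k * poch E k * poch F k))) n =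
      binomSum (whippleTerm A (D - B) (E + F - A - B) (E - A) (F - A) D) n /
        (poch E n * poch F n) := by
  set r : ℕ → ℝ := fun k => (-1) ^ k * (poch A k / (poch E k * poch F k)) with hr
  set s : ℕ → ℕ → ℝ := fun i j =>
    poch (D - B) i * poch (D - C) i * poch (B + C - D) j / poch D i with hs
  have hexpand : ∀ k l, k + l = n →
      (-1) ^ k * (poch A k * poch B k * poch C k / (poch D k * poch E k * poch F k)) =
        binomSum (fun i j => r (i + j) * s i j) k := by
    intro k l _
    have hsaal := binomSum_saalschutz (D - B) (D - C) hD k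
    rw [sub_sub_cancel, sub_sub_cancel, show B - (D - C) = B + C - D by ring] at hsaal
    rw [binomSum.congr (g := fun i j => r k * s i j) fun i j hij => by rw [hij],
      binomSum.const_mul, hsaal, hr]
    ring
  have hinner : ∀ i m, i + m = n →
      binomSum (fun j _ => r (i + j) * s i j) m = (poch E n * poch F n)⁻¹ *
        whippleTerm A (D - B) (E + F - A - B) (E - A) (F - A) D i m := by
    rintro i m rfl
    push_cast at hC
    have hbalanced := binomSum_saalschutz_balanced (A + i) (σ := B + C - D) (E := E + i)
      (F := F + i) (by positivity) (by positivity) m (by linarith)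
    have hreflect : (-1) ^ i * poch (D - C) i = poch (E + F - A - B + m) i :=
      neg_one_pow_mul_poch _ _ _ (by linarith)
    have hsplit : ∀ j l, j + l = m → r (i + j) * s i j =
        r i * (poch (D - B) i * poch (D - C) i / poch D i) * ((-1) ^ j *
          (poch (A + i) j * poch (B + C - D) j / (poch (E + i) j * poch (F + i) j))) := by
      intro j l _
      simp only [hr, hs, poch_add, pow_add]
      ring
    rw [binomSum.congr hsplit, binomSum.const_mul, hbalanced, whippleTerm, ← hreflect, hr,
      poch_add E, poch_add F, add_sub_add_right_eq_sub, add_sub_add_right_eq_sub]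
    ring
  rw [binomSum.congr hexpand, binomSum.assoc (fun i j _ => r (i + j) * s i j),
    binomSum.congr hinner, binomSum.const_mul, div_eq_inv_mul]

end FiniteSums

section WhipplePositivity

variable {A X Y P Q D : ℝ}

lemma whippleTerm_zero_left (n : ℕ) :
    whippleTerm A X Y P Q D 0 n = poch P n * poch Q n := by
  simp only [whippleTerm, poch_zero, one_mul, div_one]

lemma whippleTerm_zero_right (n : ℕ) :
    whippleTerm A X Y P Q D n 0 = poch A n * poch X n * poch Y n / poch D n := by
  simp only [whippleTerm, poch_zero, mul_one, Nat.cast_zero, add_zero]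

lemma binomSum_whippleTerm_zero : binomSum (whippleTerm A X Y P Q D) 0 = 1 := by
  rw [binomSum.zero, whippleTerm_zero_left, poch_zero, poch_zero, one_mul]

lemma binomSum_whippleTerm_one :
    binomSum (whippleTerm A X Y P Q D) 1 = P * Q + A * X * Y / D := by
  rw [binomSum.succ, binomSum.zero, zero_add, whippleTerm_zero_left, whippleTerm_zero_right]
  simp only [poch_one]

lemma whippleTerm_nonneg (hA : 0 ≤ A) (hX : 0 ≤ X) (hD : 0 < D) {j : ℕ} (hY : 0 ≤ Y + j)
    (hPQ : 0 ≤ poch P j * poch Q j) (i : ℕ) : 0 ≤ whippleTerm A X Y P Q D i j := by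
  rw [whippleTerm, mul_assoc (_ * _)]
  exact div_nonneg (mul_nonneg (mul_nonneg (mul_nonneg (poch_nonneg hA i) (poch_nonneg hX i))
    (poch_nonneg hY i)) hPQ) (poch_pos hD i).le

lemma binomSum_whippleTerm_pos_of_pos_right (hA : 0 ≤ A) (hX : 0 ≤ X) (hY : 0 ≤ Y) (hD : 0 < D)
    (hPQ : ∀ j, 0 < poch P j * poch Q j) (n : ℕ) : 0 < binomSum (whippleTerm A X Y P Q D) n :=
  binomSum.pos (zero_add n) (by rw [whippleTerm_zero_left]; exact hPQ n) fun i j _ =>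
    whippleTerm_nonneg hA hX hD (by positivity) (hPQ j).le i

lemma binomSum_whippleTerm_pos_of_pos_left (hA : 0 < A) (hX : 0 < X) (hY : 0 < Y) (hD : 0 < D)
    (hP : 0 ≤ P) (hQ : 0 ≤ Q) (n : ℕ) : 0 < binomSum (whippleTerm A X Y P Q D) n := by
  refine binomSum.pos (add_zero n) ?_ fun i j _ => whippleTerm_nonneg hA.le hX.le hD
    (by positivity) (mul_nonneg (poch_nonneg hP j) (poch_nonneg hQ j)) i
  rw [whippleTerm_zero_right]
  have hAn := poch_pos hA n
  have hXn := poch_pos hX n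
  have hYn := poch_pos hY n
  have hDn := poch_pos hD n
  positivity

/-- The factor `hⱼ + qᵢ`, with `hⱼ = (P + j)(Q + j)/(Y + j)` and `qᵢ = (A + i)(X + i)/(D + i)`,
by which the terms are weighted in the recurrence `binomSum_whippleTerm_succ`. -/
noncomputable def whippleWeight (A X Y P Q D : ℝ) (i j : ℕ) : ℝ :=
  (P + j) * (Q + j) / (Y + j) + (A + i) * (X + i) / (D + i)

lemma binomSum_whippleTerm_succ (hD : 0 < D) (hY : ∀ j : ℕ, Y + j ≠ 0) (n : ℕ) :
    binomSum (whippleTerm A X Y P Q D) (n + 1) = (Y + n) *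
      binomSum (fun i j => whippleTerm A X Y P Q D i j * whippleWeight A X Y P Q D i j) n := by
  rw [binomSum.succ, ← binomSum.const_mul]
  refine binomSum.congr fun i j hij => ?_
  have hYj := hY j
  have hDi : D + i ≠ 0 := by positivity
  have hDpoch := poch_ne_zero hD i
  have hshift : poch (Y + (j + 1 : ℕ)) i = poch (Y + j) i * (Y + j + i) / (Y + j) := by
    rw [eq_div_iff hYj, ← poch_succ, poch_succ_left, Nat.cast_succ, ← add_assoc, mul_comm]
  simp only [whippleTerm, whippleWeight, hshift, poch_succ, ← hij]
  push_cast
  field_simp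
  ring

lemma whippleWeight_lt (hD : 0 < D) (hAD : A ≤ D) (hXD : X ≤ D) (hY : Y < 0) (hYP : Y < P)
    (hYQ : Y < Q) (i : ℕ) {j : ℕ} (hj : 0 < Y + j) :
    whippleWeight A X Y P Q D (i + j) 0 < whippleWeight A X Y P Q D i j := by
  have hj₀ : (0 : ℝ) ≤ j := Nat.cast_nonneg j
  have hPQ : P * Q / Y + j < (P + j) * (Q + j) / (Y + j) := by
    have hdiff : (P + j) * (Q + j) / (Y + j) - (P * Q / Y + j) =
        (P - Y) * (Q - Y) * j / ((Y + j) * -Y) := by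
      have hY' := hY.ne
      have hj' := hj.ne'
      field_simp
      ring
    have hpos : 0 < (P - Y) * (Q - Y) * j / ((Y + j) * -Y) :=
      div_pos (mul_pos (mul_pos (by linarith) (by linarith)) (by linarith))
        (mul_pos hj (by linarith))
    linarith
  have hAX : (A + (i + j)) * (X + (i + j)) / (D + (i + j)) ≤ (A + i) * (X + i) / (D + i) + j := by
    have hi : 0 < D + i := by positivity
    have hij : 0 < D + (i + j) := by positivity
    have hdiff : (A + i) * (X + i) / (D + i) + j - (A + (i + j)) * (X + (i + j)) / (D + (i + j)) =
        (D - A) * (D - X) * j / ((D + i) * (D + (i + j))) := by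
      field_simp
      ring
    have hnonneg : 0 ≤ (D - A) * (D - X) * j / ((D + i) * (D + (i + j))) :=
      div_nonneg (mul_nonneg (mul_nonneg (by linarith) (by linarith)) hj₀) (mul_pos hi hij).le
    linarith
  simp only [whippleWeight, Nat.cast_zero, add_zero, Nat.cast_add]
  linarith

/-- Only the term of index `(n, 0)` is nonpositive, and the weight is smallest there. Replacing all
weights in the recurrence by the nonnegative part of that one thus decreases the sum, to a
nonnegative multiple of the preceding one. -/
lemma binomSum_whippleTerm_succ_pos (hA : 0 ≤ A) (hX : 0 ≤ X) (hY₁ : -1 < Y) (hY₀ : Y < 0)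
    (hP : 0 < P) (hQ : 0 < Q) (hD : 0 < D) (hAD : A ≤ D) (hXD : X ≤ D) {n : ℕ} (hn : n ≠ 0)
    (h : 0 ≤ binomSum (whippleTerm A X Y P Q D) n) :
    0 < binomSum (whippleTerm A X Y P Q D) (n + 1) := by
  set f := whippleTerm A X Y P Q D with hf
  set ρ := whippleWeight A X Y P Q D with hρ
  have hY : ∀ j : ℕ, j ≠ 0 → 0 < Y + j := fun j hj => by
    linarith [Nat.one_le_cast (α := ℝ).mpr (Nat.one_le_iff_ne_zero.mpr hj)]
  have hY' : ∀ j : ℕ, Y + j ≠ 0 := fun j => by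
    rcases eq_or_ne j 0 with rfl | hj
    · simpa only [Nat.cast_zero, add_zero] using hY₀.ne
    · exact (hY j hj).ne'
  have hweight : ∀ i j, j ≠ 0 → i + j = n → max (ρ n 0) 0 < ρ i j := by
    rintro i j hj rfl
    have hYj := hY j hj
    exact max_lt (whippleWeight_lt hD hAD hXD hY₀ (hY₀.trans hP) (hY₀.trans hQ) i hYj)
      (by rw [hρ, whippleWeight]; positivity)
  have hpoch : ∀ j, 0 < poch P j * poch Q j := fun j => mul_pos (poch_pos hP j) (poch_pos hQ j)
  have hf₀ : f n 0 ≤ 0 := by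
    rw [hf, whippleTerm_zero_right]
    exact div_nonpos_of_nonpos_of_nonneg (mul_nonpos_of_nonneg_of_nonpos
      (mul_nonneg (poch_nonneg hA n) (poch_nonneg hX n)) (poch_neg hY₁ hY₀ hn).le)
      (poch_pos hD n).le
  have hpos : 0 < binomSum (fun i j => f i j * (ρ i j - max (ρ n 0) 0)) n := by
    refine binomSum.pos (zero_add n) (mul_pos ?_ (sub_pos.mpr (hweight 0 n hn (zero_add n)))) ?_
    · rw [hf, whippleTerm_zero_left]
      exact hpoch n
    · intro i j hij
      rcases eq_or_ne j 0 with rfl | hj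
      · obtain rfl : i = n := hij
        exact mul_nonneg_of_nonpos_of_nonpos hf₀ (sub_nonpos.mpr (le_max_left _ _))
      · exact mul_nonneg (whippleTerm_nonneg hA hX hD (hY j hj).le (hpoch j).le i)
          (sub_nonneg.mpr (hweight i j hj hij).le)
  have hsplit : binomSum (fun i j => f i j * ρ i j) n =
      binomSum (fun i j => f i j * (ρ i j - max (ρ n 0) 0)) n + max (ρ n 0) 0 * binomSum f n := by
    rw [← binomSum.const_mul, ← binomSum.add]
    exact binomSum.congr fun i j _ => by ring
  rw [binomSum_whippleTerm_succ hD hY', hsplit]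
  exact mul_pos (hY n hn) (add_pos_of_pos_of_nonneg hpos (mul_nonneg (le_max_right _ _) h))

lemma binomSum_whippleTerm_nonneg (hA : 0 ≤ A) (hX : 0 ≤ X) (hY₁ : -1 < Y) (hY₀ : Y < 0)
    (hP : 0 < P) (hQ : 0 < Q) (hD : 0 < D) (hAD : A ≤ D) (hXD : X ≤ D)
    (h : 0 ≤ binomSum (whippleTerm A X Y P Q D) 1) (n : ℕ) :
    0 ≤ binomSum (whippleTerm A X Y P Q D) n := by
  induction n with
  | zero => rw [binomSum_whippleTerm_zero]; exact zero_le_one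
  | succ n ih =>
    rcases eq_or_ne n 0 with rfl | hn
    · exact h
    · exact (binomSum_whippleTerm_succ_pos hA hX hY₁ hY₀ hP hQ hD hAD hXD hn ih).le

lemma binomSum_whippleTerm_pos (hA : 0 ≤ A) (hX : 0 ≤ X) (hY₁ : -1 < Y) (hY₀ : Y < 0)
    (hP : 0 < P) (hQ : 0 < Q) (hD : 0 < D) (hAD : A ≤ D) (hXD : X ≤ D)
    (h : 0 ≤ binomSum (whippleTerm A X Y P Q D) 1) {n : ℕ} (hn : n ≠ 1) :
    0 < binomSum (whippleTerm A X Y P Q D) n := by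
  rcases n with _ | n
  · rw [binomSum_whippleTerm_zero]
    exact one_pos
  · exact binomSum_whippleTerm_succ_pos hA hX hY₁ hY₀ hP hQ hD hAD hXD (by simpa using hn)
      (binomSum_whippleTerm_nonneg hA hX hY₁ hY₀ hP hQ hD hAD hXD h n)

end WhipplePositivity

section GasperExpansion

/-- The normalizing factor `(μ)ₙ (μ + 2n) / (μ + n)` of Gasper's expansion, written as
`(μ)ₙ + n (μ)ₙ₋₁` for positive `n` to avoid the division at `μ + n = 0`; for `n = 0` the second
summand vanishes. -/
noncomputable def gasperWeight (μ : ℝ) (n : ℕ) : ℝ := poch μ n + n * poch μ (n - 1)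

lemma gasperWeight_zero (μ : ℝ) : gasperWeight μ 0 = 1 := by
  rw [gasperWeight, poch_zero, Nat.cast_zero, zero_mul, add_zero]

lemma gasperWeight_succ (μ : ℝ) (n : ℕ) :
    gasperWeight μ (n + 1) = poch μ n * (μ + (2 * n + 1)) := by
  rw [gasperWeight, poch_succ, Nat.add_sub_cancel]
  push_cast
  ring

lemma gasperWeight_pos {μ : ℝ} (hμ : 0 < μ) (n : ℕ) : 0 < gasperWeight μ n := by
  cases n with
  | zero => rw [gasperWeight_zero]; exact one_pos
  | succ n => rw [gasperWeight_succ]; exact mul_pos (poch_pos hμ n) (by positivity)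

lemma gasperWeight_mul_poch (μ : ℝ) (k l : ℕ) :
    gasperWeight μ (k + l) * poch (μ + (k + l : ℕ) - 1) k =
      poch μ (2 * k) * gasperWeight (μ + 2 * k) l := by
  have hmerge : ∀ n, poch μ n * poch (μ + (n + 1 : ℕ) - 1) k = poch μ (n + k) := fun n => by
    rw [poch_add, Nat.cast_succ, ← add_assoc, add_sub_cancel_right]
  rcases l with _ | l
  · rcases k with _ | k
    · simp only [mul_zero, add_zero, poch_zero, gasperWeight_zero]
    · rw [add_zero, gasperWeight_succ, gasperWeight_zero, mul_right_comm, hmerge,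
        show 2 * (k + 1) = k + (k + 1) + 1 by ring, poch_succ _ (k + (k + 1))]
      push_cast
      ring
  · rw [← add_assoc, gasperWeight_succ, gasperWeight_succ, mul_right_comm, hmerge,
      show k + l + k = 2 * k + l by ring, poch_add]
    push_cast
    ring

lemma binomSum_gasperWeight (M : ℝ) {e : ℕ} (he : e ≠ 0) :
    binomSum (fun l i => (-1) ^ l * gasperWeight M l * poch (M + l + e) i) e = 0 := by
  obtain ⟨n, rfl⟩ := Nat.exists_eq_succ_of_ne_zero he
  have hsplit : binomSum (fun l i => (-1) ^ l * gasperWeight M l * poch (M + l + (n + 1 : ℕ)) i)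
        (n + 1) =
      binomSum (fun l i => (-1) ^ l * poch M l * poch (M + l + (n + 1 : ℕ)) i) (n + 1) +
        binomSum (fun l i => l * ((-1) ^ l * poch M (l - 1) * poch (M + l + (n + 1 : ℕ)) i))
          (n + 1) := by
    rw [← binomSum.add]
    exact binomSum.congr fun l i _ => by rw [gasperWeight]; ring
  rw [hsplit, binomSum.succ, binomSum.fst_mul, ← binomSum.const_mul, ← binomSum.add]
  refine binomSum.eq_zero fun l i _ => ?_
  rw [poch_succ_left (M + l + (n + 1 : ℕ)), poch_succ M, Nat.add_sub_cancel,
    show M + l + (n + 1 : ℕ) + 1 = M + (l + 1 : ℕ) + (n + 1 : ℕ) by push_cast; ring]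
  push_cast
  ring

/-- Up to the factor `n! 4ⁿ ((μ + 1) / 2)ₙ²`, the coefficients of Gasper's expansion in squares of
Bessel functions of the power series with coefficients `(μ / 2)ₖ / (((μ + 1) / 2)ₖ k!) gₖ`. -/
noncomputable def gasperCoeff (μ : ℝ) (g : ℕ → ℝ) (n : ℕ) : ℝ :=
  gasperWeight μ n * binomSum (fun k _ => (-1) ^ k * (poch (μ + n - 1) k * g k)) n

lemma gasperCoeff_eq (μ : ℝ) (g : ℕ → ℝ) (n : ℕ) :
    gasperCoeff μ g n =
      binomSum (fun k l => (-1) ^ k * (poch μ (2 * k) * gasperWeight (μ + 2 * k) l * g k)) n := by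
  rw [gasperCoeff, ← binomSum.const_mul]
  refine binomSum.congr fun k l hkl => ?_
  rw [← gasperWeight_mul_poch, hkl]
  ring

lemma binomSum_gasperCoeff (μ : ℝ) (g : ℕ → ℝ) (m : ℕ) :
    binomSum (fun n i => (-1) ^ n * gasperCoeff μ g n * poch (μ + n + m) i) m =
      poch μ (2 * m) * g m := by
  set r : ℕ → ℝ := fun k => poch μ (2 * k) * g k
  have hexpand : ∀ n i, n + i = m →
      (-1) ^ n * gasperCoeff μ g n * poch (μ + n + m) i = binomSum (fun k l => r k *
        ((-1) ^ l * gasperWeight (μ + 2 * k) l * poch (μ + 2 * k + l + (l + i : ℕ)) i)) n := by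
    rintro n i rfl
    rw [gasperCoeff_eq, mul_right_comm, ← binomSum.const_mul]
    refine binomSum.congr fun k l hkl => ?_
    have hsign : ((-1) ^ k * (-1) ^ k : ℝ) = 1 := by rw [← mul_pow]; norm_num
    have harg : μ + n + (n + i : ℕ) = μ + 2 * k + l + (l + i : ℕ) := by
      rw [← hkl]; push_cast; ring
    rw [harg, ← hkl, pow_add]
    linear_combination ((-1) ^ l * poch (μ + 2 * k + l + (l + i : ℕ)) i * poch μ (2 * k) *
      gasperWeight (μ + 2 * k) l * g k) * hsign
  have hinner : ∀ k e, binomSum (fun l i => r k *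
      ((-1) ^ l * gasperWeight (μ + 2 * k) l * poch (μ + 2 * k + l + (l + i : ℕ)) i)) e =
        r k * binomSum (fun l i =>
          (-1) ^ l * gasperWeight (μ + 2 * k) l * poch (μ + 2 * k + l + e) i) e := by
    intro k e
    rw [← binomSum.const_mul]
    exact binomSum.congr fun l i hli => by rw [hli]
  rw [binomSum.congr hexpand, binomSum.assoc (fun k l i => r k *
    ((-1) ^ l * gasperWeight (μ + 2 * k) l * poch (μ + 2 * k + l + (l + i : ℕ)) i))]
  simp only [hinner]
  rw [binomSum.eq_last fun k e _ he => by rw [binomSum_gasperWeight _ he, mul_zero],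
    binomSum.zero, gasperWeight_zero, poch_zero, pow_zero, mul_one, mul_one, mul_one]

lemma poch_mul_gasperWeight_le {μ : ℝ} (hμ : 0 < μ) (k l : ℕ) :
    poch μ (2 * k) * gasperWeight (μ + 2 * k) l ≤
      2 ^ (k + l) * (poch μ (2 * (k + l)) / min μ 1) := by
  have hmin : 0 < min μ 1 := lt_min hμ one_pos
  have hbound : ∀ m ≤ 2 * (k + l), poch μ m ≤ poch μ (2 * (k + l)) / min μ 1 := fun m hm => by
    rw [le_div_iff₀ hmin, mul_comm]
    exact min_one_mul_poch_le hμ hm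
  have hmerge : ∀ m, poch μ (2 * k) * poch (μ + 2 * k) m = poch μ (2 * k + m) := fun m => by
    rw [poch_add, Nat.cast_mul, Nat.cast_ofNat]
  have hpow : (1 + l : ℝ) ≤ 2 ^ (k + l) := by
    have : l + 1 ≤ 2 ^ (k + l) :=
      (Nat.lt_two_pow_self (n := l)).trans_le (Nat.pow_le_pow_right two_pos (by omega))
    rw [add_comm]
    exact_mod_cast this
  calc poch μ (2 * k) * gasperWeight (μ + 2 * k) l
      = poch μ (2 * k + l) + l * poch μ (2 * k + (l - 1)) := by
        rw [gasperWeight, ← hmerge, ← hmerge]; ring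
    _ ≤ poch μ (2 * (k + l)) / min μ 1 + l * (poch μ (2 * (k + l)) / min μ 1) := by
        gcongr <;> exact hbound _ (by omega)
    _ = (1 + l) * (poch μ (2 * (k + l)) / min μ 1) := by ring
    _ ≤ _ := mul_le_mul_of_nonneg_right hpow (div_nonneg (poch_pos hμ _).le hmin.le)

lemma abs_gasperCoeff_le {μ L B : ℝ} (hμ : 0 < μ) (hL : 1 ≤ L) (hB : 0 ≤ B) {g : ℕ → ℝ}
    (hg : ∀ k, |g k| ≤ B * L ^ k) (n : ℕ) :
    |gasperCoeff μ g n| ≤ (4 * L) ^ n * (poch μ (2 * n) / min μ 1 * B) := by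
  rw [gasperCoeff_eq]
  calc _ ≤ 2 ^ n * (2 ^ n * (poch μ (2 * n) / min μ 1) * (B * L ^ n)) := by
        refine binomSum.abs_le fun k l hkl => ?_
        have hpos : 0 < poch μ (2 * k) * gasperWeight (μ + 2 * k) l :=
          mul_pos (poch_pos hμ _) (gasperWeight_pos (by positivity) l)
        have hweight := poch_mul_gasperWeight_le hμ k l
        rw [hkl] at hweight
        have hgk : |g k| ≤ B * L ^ n :=
          (hg k).trans (mul_le_mul_of_nonneg_left (pow_le_pow_right₀ hL (by omega)) hB)
        rw [abs_mul, abs_pow, abs_neg, abs_one, one_pow, one_mul, abs_mul, abs_of_pos hpos]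
        exact mul_le_mul hweight hgk (abs_nonneg _) (hpos.le.trans hweight)
    _ = (4 * L) ^ n * (poch μ (2 * n) / min μ 1 * B) := by
        rw [mul_pow, show (4 : ℝ) = 2 * 2 by norm_num, mul_pow]
        ring

end GasperExpansion

section ExponentialConvolution

lemma binomSum_div_factorial (u : ℕ → ℕ → ℝ) (m : ℕ) :
    binomSum u m / m.factorial =
      ∑ p ∈ antidiagonal m, u p.1 p.2 / (p.1.factorial * p.2.factorial) := by
  rw [binomSum, Finset.sum_div]
  refine Finset.sum_congr rfl fun p hp => ?_
  have hm : (m.factorial : ℝ) ≠ 0 := by positivity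
  rw [← mem_antidiagonal.mp hp] at hm ⊢
  rw [Nat.cast_add_choose]
  field_simp

lemma summable_div_factorial_mul_factorial {u : ℕ → ℕ → ℝ} {B K M : ℝ} (hK : 0 ≤ K) (hM : 0 ≤ M)
    (hu : ∀ n i, |u n i| ≤ B * (K ^ n * M ^ i)) :
    Summable fun p : ℕ × ℕ => u p.1 p.2 / (p.1.factorial * p.2.factorial) := by
  have hexp : Summable fun p : ℕ × ℕ =>
      K ^ p.1 / p.1.factorial * (M ^ p.2 / p.2.factorial) :=
    (Real.summable_pow_div_factorial K).mul_of_nonneg (Real.summable_pow_div_factorial M)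
      (fun n => by positivity) (fun i => by positivity)
  refine Summable.of_norm_bounded (hexp.mul_left B) fun p => ?_
  have hfac : (0 : ℝ) < p.1.factorial * p.2.factorial := by positivity
  rw [Real.norm_eq_abs, abs_div, abs_of_pos hfac, div_mul_div_comm, ← mul_div_assoc]
  exact div_le_div_of_nonneg_right (hu p.1 p.2) hfac.le

lemma hasSum_tsum_div_factorial {u : ℕ → ℕ → ℝ} {B K M : ℝ} (hK : 0 ≤ K) (hM : 0 ≤ M)
    (hu : ∀ n i, |u n i| ≤ B * (K ^ n * M ^ i)) :
    HasSum (fun n => ∑' i, u n i / (n.factorial * i.factorial))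
      (∑' m, binomSum u m / m.factorial) := by
  have hsum := summable_div_factorial_mul_factorial hK hM hu
  have hsigma := Finset.HasAntidiagonal.sigmaAntidiagonalEquivProd.summable_iff.mpr hsum
  have hdiag : ∑' p : ℕ × ℕ, u p.1 p.2 / (p.1.factorial * p.2.factorial) =
      ∑' m, binomSum u m / m.factorial := by
    refine (Finset.HasAntidiagonal.sigmaAntidiagonalEquivProd.tsum_eq _).symm.trans
      (hsigma.tsum_sigma.trans (tsum_congr fun m => ?_))
    rw [binomSum_div_factorial, tsum_fintype]
    exact Finset.sum_coe_sort (antidiagonal m) fun p =>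
      u p.1 p.2 / (p.1.factorial * p.2.factorial)
  rw [← hdiag, hsum.tsum_prod]
  exact hsum.prod.hasSum

end ExponentialConvolution

section ZeroF1

/-- The hypergeometric series `₀F₁(; α; y)`, which is a Bessel function up to normalization. -/
noncomputable def zeroF1 (α y : ℝ) : ℝ := ∑' k : ℕ, y ^ k / (k.factorial * poch α k)

/-- The coefficient of `yᵏ / k!` in `₀F₁(; α; y)²`. -/
noncomputable def zeroF1SqCoeff (α : ℝ) (k : ℕ) : ℝ := poch (2 * α - 1 + k) k / poch α k ^ 2

lemma binomSum_inv_poch {α : ℝ} (hα : 0 < α) (k : ℕ) :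
    binomSum (fun i j => (poch α i)⁻¹ * (poch α j)⁻¹) k = zeroF1SqCoeff α k := by
  have hpoch : ∀ i j, i + j = k →
      poch α k * (poch α i)⁻¹ = (-1) ^ j * poch (1 - α - k) j := by
    rintro i j rfl
    rw [poch_add, mul_right_comm, mul_inv_cancel₀ (poch_ne_zero hα i), one_mul,
      neg_one_pow_mul_poch _ (α + i) j (by push_cast; ring)]
  have hterm : ∀ i j, i + j = k → (poch α i)⁻¹ * (poch α j)⁻¹ =
      (-1) ^ k / poch α k ^ 2 * (poch (1 - α - k) i * poch (1 - α - k) j) := by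
    intro i j hij
    have hk := poch_ne_zero hα k
    have hi := hpoch i j hij
    have hj := hpoch j i (by rw [add_comm, hij])
    rw [div_mul_eq_mul_div, eq_div_iff (pow_ne_zero 2 hk), ← hij, pow_add, hij]
    calc _ = (poch α k * (poch α i)⁻¹) * (poch α k * (poch α j)⁻¹) := by ring
      _ = _ := by rw [hi, hj]; ring
  rw [binomSum.congr hterm, binomSum.const_mul, binomSum_vandermonde, div_mul_eq_mul_div,
    neg_one_pow_mul_poch _ (2 * α - 1 + k) k (by ring), zeroF1SqCoeff]

lemma abs_pow_mul_inv_poch_le {α : ℝ} (hα : 0 < α) (y : ℝ) (k : ℕ) :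
    |y ^ k * (poch α k)⁻¹| ≤ (min α 1)⁻¹ * |y| ^ k := by
  rw [abs_mul, abs_pow, abs_of_pos (inv_pos.mpr (poch_pos hα k)), mul_comm]
  gcongr
  exact min_one_le_poch hα k

lemma zeroF1_sq {α : ℝ} (hα : 0 < α) (y : ℝ) :
    zeroF1 α y ^ 2 = ∑' k : ℕ, zeroF1SqCoeff α k * y ^ k / k.factorial := by
  set u : ℕ → ℕ → ℝ := fun i j => y ^ i * (poch α i)⁻¹ * (y ^ j * (poch α j)⁻¹) with hu
  have hbound : ∀ i j, |u i j| ≤ (min α 1)⁻¹ * (min α 1)⁻¹ * (|y| ^ i * |y| ^ j) := by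
    intro i j
    rw [hu, abs_mul, mul_mul_mul_comm]
    exact mul_le_mul (abs_pow_mul_inv_poch_le hα y i) (abs_pow_mul_inv_poch_le hα y j)
      (abs_nonneg _) ((abs_nonneg _).trans (abs_pow_mul_inv_poch_le hα y i))
  have hcoeff : ∀ k, binomSum u k = zeroF1SqCoeff α k * y ^ k := by
    intro k
    rw [← binomSum_inv_poch hα, mul_comm, ← binomSum.const_mul]
    refine binomSum.congr fun i j hij => ?_
    rw [← hij, pow_add]
    ring
  simp only [← hcoeff]
  rw [← (hasSum_tsum_div_factorial (abs_nonneg y) (abs_nonneg y) hbound).tsum_eq, pow_two,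
    zeroF1, ← tsum_mul_right]
  refine tsum_congr fun i => ?_
  rw [← tsum_mul_left]
  refine tsum_congr fun j => ?_
  rw [hu]
  ring

lemma zeroF1SqCoeff_eq {α : ℝ} (hα : 1 / 2 < α) (k : ℕ) :
    zeroF1SqCoeff α k = 4 ^ k * (poch (α - 1 / 2) k / poch α k) * (poch (2 * α - 1) k)⁻¹ := by
  have hdouble := poch_two_mul (α - 1 / 2) k
  rw [sub_add_cancel, show 2 * (α - 1 / 2) = 2 * α - 1 by ring, two_mul k, poch_add] at hdouble
  have hk : poch (2 * α - 1) k ≠ 0 := poch_ne_zero (by linarith) k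
  have hαk : poch α k ≠ 0 := poch_ne_zero (by linarith) k
  rw [zeroF1SqCoeff, eq_div_of_mul_eq hk ((mul_comm _ _).trans hdouble)]
  field_simp

lemma zeroF1SqCoeff_nonneg {α : ℝ} (hα : 1 / 2 < α) (k : ℕ) : 0 ≤ zeroF1SqCoeff α k :=
  div_nonneg (poch_nonneg (add_nonneg (by linarith) k.cast_nonneg) k) (sq_nonneg _)

lemma zeroF1SqCoeff_le {μ α : ℝ} (hμ : 0 < μ) (hα : μ ≤ 2 * α - 1) (k : ℕ) :
    zeroF1SqCoeff α k ≤ 4 ^ k * (min μ 1)⁻¹ := by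
  have hmin : 0 < min μ 1 := lt_min hμ one_pos
  have hratio : poch (α - 1 / 2) k / poch α k ≤ 1 :=
    div_le_one_of_le₀ (poch_le_poch (by linarith) (by linarith) k)
      (poch_nonneg (by linarith) k)
  have hpoch : min μ 1 ≤ poch (2 * α - 1) k :=
    (min_le_min_right 1 hα).trans (min_one_le_poch (by linarith) k)
  rw [zeroF1SqCoeff_eq (by linarith)]
  exact mul_le_mul (mul_le_of_le_one_right (by positivity) hratio) (inv_anti₀ hmin hpoch)
    (inv_nonneg.mpr (hmin.le.trans hpoch)) (by positivity)

lemma summable_zeroF1 {α : ℝ} (hα : 0 < α) (y : ℝ) :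
    Summable fun k : ℕ => y ^ k / (k.factorial * poch α k) := by
  refine Summable.of_norm_bounded
    ((Real.summable_pow_div_factorial |y|).mul_left (min α 1)⁻¹) fun k => ?_
  rw [Real.norm_eq_abs, mul_comm, ← div_div, div_eq_mul_inv _ (poch α k), abs_div, Nat.abs_cast,
    ← mul_div_assoc]
  exact div_le_div_of_nonneg_right (abs_pow_mul_inv_poch_le hα y k) (Nat.cast_nonneg _)

lemma zeroF1_ne_zero {α y : ℝ} (hα : 1 ≤ α) (hy : |y| * Real.exp |y| < α) : zeroF1 α y ≠ 0 := by
  have hα₀ : 0 < α := one_pos.trans_le hα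
  have hexp : HasSum (fun k : ℕ => |y| / α * (|y| ^ k / k.factorial)) (|y| / α * Real.exp |y|) := by
    rw [Real.exp_eq_exp_ℝ]
    exact (NormedSpace.expSeries_div_hasSum_exp |y|).mul_left _
  have htail : |∑' k : ℕ, y ^ (k + 1) / ((k + 1).factorial * poch α (k + 1))| ≤
      |y| / α * Real.exp |y| := by
    rw [← Real.norm_eq_abs]
    refine tsum_of_norm_bounded hexp fun k => ?_
    have hpoch : α ≤ poch α (k + 1) := by
      rw [poch_succ_left]
      exact le_mul_of_one_le_right hα₀.le
        ((le_min (by linarith) le_rfl).trans (min_one_le_poch (by linarith) k))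
    have hfac : (k.factorial : ℝ) ≤ (k + 1).factorial :=
      Nat.cast_le.mpr (Nat.factorial_le k.le_succ)
    rw [Real.norm_eq_abs, abs_div, abs_pow, pow_succ', div_mul_div_comm, mul_comm α,
      abs_of_pos (mul_pos (by positivity) (poch_pos hα₀ _))]
    gcongr
  have hlt : |y| / α * Real.exp |y| < 1 := by rwa [div_mul_eq_mul_div, div_lt_one hα₀]
  have hhead : zeroF1 α y =
      1 + ∑' k : ℕ, y ^ (k + 1) / ((k + 1).factorial * poch α (k + 1)) := by
    rw [zeroF1, (summable_zeroF1 hα₀ y).tsum_eq_zero_add, pow_zero, poch_zero,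
      Nat.factorial_zero, Nat.cast_one, one_mul, div_one]
  rw [hhead]
  linarith [neg_le_of_abs_le htail]

end ZeroF1

section PositivityCriterion

lemma poch_two_mul_le {μ : ℝ} (hμ : 0 < μ) (n : ℕ) :
    poch μ (2 * n) ≤ 4 ^ n * poch ((μ + 1) / 2) n ^ 2 := by
  have hdouble := poch_two_mul (μ / 2) n
  rw [mul_div_cancel₀ μ two_ne_zero, ← add_div] at hdouble
  rw [hdouble, pow_two, ← mul_assoc]
  gcongr
  · exact poch_nonneg (by linarith) n
  · exact poch_le_poch (by linarith) (by linarith) n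

lemma abs_gasperCoeff_mul_pow_le {μ L B : ℝ} (hμ : 0 < μ) (hL : 1 ≤ L) (hB : 0 ≤ B) {g : ℕ → ℝ}
    (hg : ∀ k, |g k| ≤ B * L ^ k) (y : ℝ) (n : ℕ) :
    |gasperCoeff μ g n * y ^ n / (4 ^ n * poch ((μ + 1) / 2) n ^ 2)| ≤
      (min μ 1)⁻¹ * B * (4 * L * |y|) ^ n := by
  have hν : 0 < poch ((μ + 1) / 2) n := poch_pos (by linarith) n
  have hden : 0 < 4 ^ n * poch ((μ + 1) / 2) n ^ 2 := by positivity
  rw [abs_div, abs_of_pos hden, div_le_iff₀ hden, abs_mul, abs_pow]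
  calc |gasperCoeff μ g n| * |y| ^ n
      ≤ (4 * L) ^ n * (poch μ (2 * n) / min μ 1 * B) * |y| ^ n := by
        gcongr
        exact abs_gasperCoeff_le hμ hL hB hg n
    _ ≤ (4 * L) ^ n * (4 ^ n * poch ((μ + 1) / 2) n ^ 2 / min μ 1 * B) * |y| ^ n := by
        gcongr
        exact poch_two_mul_le hμ n
    _ = _ := by rw [mul_pow _ |y|]; ring

lemma binomSum_gasperCoeff_mul_zeroF1SqCoeff {μ : ℝ} (hμ : 0 < μ) (g : ℕ → ℝ) (y : ℝ) (m : ℕ) :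
    binomSum (fun n i => gasperCoeff μ g n * y ^ n / (4 ^ n * poch ((μ + 1) / 2) n ^ 2) *
        (zeroF1SqCoeff ((μ + 1) / 2 + n) i * (-y / 4) ^ i)) m =
      poch (μ / 2) m / poch ((μ + 1) / 2) m * g m * (-y) ^ m := by
  have hν : 0 < (μ + 1) / 2 := by linarith
  have hνm := poch_ne_zero hν m
  have hdouble := poch_two_mul (μ / 2) m
  rw [mul_div_cancel₀ μ two_ne_zero, ← add_div] at hdouble
  calc _ = (-y) ^ m / (4 ^ m * poch ((μ + 1) / 2) m ^ 2) * binomSum (fun n i =>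
        (-1) ^ n * gasperCoeff μ g n * poch (μ + n + m) i) m := by
        rw [← binomSum.const_mul]
        refine binomSum.congr fun n i hni => ?_
        have hsign : (-y) ^ n * (-1) ^ n = y ^ n := by rw [← mul_pow, mul_neg_one, neg_neg]
        rw [zeroF1SqCoeff, show 2 * ((μ + 1) / 2 + n) - 1 + i = μ + n + (n + i : ℕ) by
          push_cast; ring, hni, ← hsign, ← hni, poch_add, pow_add, pow_add, div_pow]
        ring
    _ = _ := by
        rw [binomSum_gasperCoeff, hdouble]
        field_simp

lemma hasSum_gasper {μ L B : ℝ} (hμ : 0 < μ) (hL : 1 ≤ L) (hB : 0 ≤ B) {g : ℕ → ℝ}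
    (hg : ∀ k, |g k| ≤ B * L ^ k) (y : ℝ) :
    HasSum (fun n : ℕ => gasperCoeff μ g n * y ^ n /
        (n.factorial * (4 ^ n * poch ((μ + 1) / 2) n ^ 2)) *
          zeroF1 ((μ + 1) / 2 + n) (-y / 4) ^ 2)
      (∑' m : ℕ, poch (μ / 2) m / poch ((μ + 1) / 2) m * g m * (-y) ^ m / m.factorial) := by
  set u : ℕ → ℕ → ℝ := fun n i =>
    gasperCoeff μ g n * y ^ n / (4 ^ n * poch ((μ + 1) / 2) n ^ 2) *
      (zeroF1SqCoeff ((μ + 1) / 2 + n) i * (-y / 4) ^ i) with hu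
  have hbound : ∀ n i, |u n i| ≤
      (min μ 1)⁻¹ * B * (min μ 1)⁻¹ * ((4 * L * |y|) ^ n * |y| ^ i) := by
    intro n i
    have hν : μ ≤ 2 * ((μ + 1) / 2 + n) - 1 := by linarith [n.cast_nonneg (α := ℝ)]
    have hsq : |zeroF1SqCoeff ((μ + 1) / 2 + n) i * (-y / 4) ^ i| ≤ (min μ 1)⁻¹ * |y| ^ i := by
      rw [abs_mul, abs_of_nonneg (zeroF1SqCoeff_nonneg (by linarith) i), abs_pow, abs_div, abs_neg,
        abs_of_pos (four_pos (α := ℝ)), div_pow]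
      calc _ ≤ 4 ^ i * (min μ 1)⁻¹ * (|y| ^ i / 4 ^ i) := by
            gcongr
            exact zeroF1SqCoeff_le hμ hν i
        _ = _ := by field_simp
    rw [hu, abs_mul, mul_mul_mul_comm]
    exact mul_le_mul (abs_gasperCoeff_mul_pow_le hμ hL hB hg y n) hsq (abs_nonneg _)
      ((abs_nonneg _).trans (abs_gasperCoeff_mul_pow_le hμ hL hB hg y n))
  have hsum := hasSum_tsum_div_factorial (by positivity) (abs_nonneg y) hbound
  simp only [hu, binomSum_gasperCoeff_mul_zeroF1SqCoeff hμ] at hsum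
  refine hsum.congr_fun fun n => ?_
  rw [zeroF1_sq (by positivity), ← tsum_mul_left]
  refine tsum_congr fun i => ?_
  ring

/-- The sequence for which `hasSum_gasper` expands `₁F₂(a; b, c; -y)`. -/
noncomputable def gasperSeq (μ a b c : ℝ) (k : ℕ) : ℝ :=
  poch ((μ + 1) / 2) k * poch a k / (poch (μ / 2) k * poch b k * poch c k)

lemma abs_gasperSeq_le {μ a b c : ℝ} (hμ : 0 < μ) (ha : 0 < a) (hab : a ≤ b) (hc : 0 < c) (k : ℕ) :
    |gasperSeq μ a b c k| ≤ (min c 1)⁻¹ * ((μ + 1) / μ) ^ k := by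
  have hmin : 0 < min c 1 := lt_min hc one_pos
  have hL : 1 ≤ (μ + 1) / μ := (one_le_div hμ).mpr (by linarith)
  have hscale := poch_mul_le (show 0 ≤ μ / 2 by linarith) hL k
  rw [show (μ + 1) / μ * (μ / 2) = (μ + 1) / 2 by field_simp] at hscale
  have hμk := poch_pos (half_pos hμ) k
  have hνk := poch_pos (show 0 < (μ + 1) / 2 by linarith) k
  have hak := poch_pos ha k
  have hbk := poch_pos (ha.trans_le hab) k
  have hck := poch_pos hc k
  have hone : 1 ≤ (min c 1)⁻¹ * poch c k := by
    rw [inv_mul_eq_div, one_le_div hmin]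
    exact min_one_le_poch hc k
  rw [gasperSeq, abs_of_pos (by positivity), div_le_iff₀ (by positivity)]
  calc poch ((μ + 1) / 2) k * poch a k
      ≤ ((μ + 1) / μ) ^ k * poch (μ / 2) k * poch b k := by
        gcongr
        exact poch_le_poch ha.le hab k
    _ ≤ ((μ + 1) / μ) ^ k * poch (μ / 2) k * poch b k * ((min c 1)⁻¹ * poch c k) :=
        le_mul_of_one_le_right (by positivity) hone
    _ = _ := by ring

lemma oneF2_neg_pos_of_gasperCoeff {μ a b c y : ℝ} (hμ : 0 < μ) (ha : 0 < a) (hab : a ≤ b)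
    (hc : 0 < c) (hy : 0 < y) (hnonneg : ∀ n, 0 ≤ gasperCoeff μ (gasperSeq μ a b c) n)
    (hpos : ∀ᶠ n in Filter.atTop, 0 < gasperCoeff μ (gasperSeq μ a b c) n) :
    0 < oneF2 a b c (-y) := by
  have hν : 0 < (μ + 1) / 2 := by linarith
  have hL : 1 ≤ (μ + 1) / μ := (one_le_div hμ).mpr (by linarith)
  have hB : 0 ≤ (min c 1)⁻¹ := inv_nonneg.mpr (le_min hc.le zero_le_one)
  have hsum := hasSum_gasper hμ hL hB (abs_gasperSeq_le hμ ha hab hc) y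
  have hseries : oneF2 a b c (-y) = ∑' m : ℕ, poch (μ / 2) m / poch ((μ + 1) / 2) m *
      gasperSeq μ a b c m * (-y) ^ m / m.factorial := by
    refine tsum_congr fun m => ?_
    have hνm := poch_ne_zero hν m
    have hμm := poch_ne_zero (half_pos hμ) m
    rw [gasperSeq]
    field_simp
  have hlarge : ∀ᶠ n : ℕ in Filter.atTop, |-y / 4| * Real.exp |-y / 4| < n ∧ (1 : ℝ) ≤ n :=
    (tendsto_natCast_atTop_atTop.eventually_gt_atTop _).and
      (tendsto_natCast_atTop_atTop.eventually_ge_atTop _)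
  obtain ⟨N, hN, hNexp, hN₁⟩ := (hpos.and hlarge).exists
  have hzero : zeroF1 ((μ + 1) / 2 + N) (-y / 4) ≠ 0 :=
    zeroF1_ne_zero (by linarith) (by linarith)
  have hNν := poch_pos hν N
  rw [hseries, ← hsum.tsum_eq]
  refine hsum.summable.tsum_pos (fun n => ?_) N (by positivity)
  have hn := hnonneg n
  positivity

end PositivityCriterion

section OneF2Positivity

variable {μ a b c : ℝ}

lemma gasperCoeff_gasperSeq_eq_left (hμ : 0 < μ) (hb : 0 < b) (hc : 0 < c)
    (hbc : b + c = μ + a + 1 / 2) (n : ℕ) :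
    gasperCoeff μ (gasperSeq μ a b c) n =
      gasperWeight μ n * (binomSum (whippleTerm ((μ + 1) / 2) (μ / 2 - a) (μ / 2)
        (b - (μ + 1) / 2) (c - (μ + 1) / 2) (μ / 2)) n / (poch b n * poch c n)) := by
  have hwhipple := binomSum_whipple ((μ + 1) / 2) a (half_pos hμ) hb hc n
    (C := μ + n - 1) (by linarith)
  rw [show b + c - (μ + 1) / 2 - a = μ / 2 by linarith] at hwhipple
  rw [gasperCoeff, ← hwhipple]
  congr 1
  refine binomSum.congr fun k l _ => ?_
  rw [gasperSeq]
  ring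

lemma gasperCoeff_gasperSeq_eq_right (hμ : 0 < μ) (hb : 0 < b) (hc : 0 < c)
    (hbc : b + c = μ + a + 1 / 2) (n : ℕ) :
    gasperCoeff μ (gasperSeq μ a b c) n =
      gasperWeight μ n * (binomSum (whippleTerm a (c - (μ + 1) / 2) (b - a - 1 / 2)
        (μ / 2 - a) (b - a) c) n / (poch (μ / 2) n * poch b n)) := by
  have hwhipple := binomSum_whipple a ((μ + 1) / 2) hc (half_pos hμ) hb n
    (C := μ + n - 1) (by linarith)
  rw [show μ / 2 + b - a - (μ + 1) / 2 = b - a - 1 / 2 by ring] at hwhipple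
  rw [gasperCoeff, ← hwhipple]
  congr 1
  refine binomSum.congr fun k l _ => ?_
  rw [gasperSeq]
  ring

lemma gasperCoeff_gasperSeq_pos_of_lt (ha : 0 < a) (hb : 0 < b) (hc : 0 < c)
    (hbc : b + c = μ + a + 1 / 2) (haμ : 2 * a ≤ μ) (hbν : b < (μ + 1) / 2) (hcν : c < (μ + 1) / 2)
    (n : ℕ) : 0 < gasperCoeff μ (gasperSeq μ a b c) n := by
  have hμ : 0 < μ := by linarith
  have hpoch : ∀ j, 0 < poch (b - (μ + 1) / 2) j * poch (c - (μ + 1) / 2) j := by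
    intro j
    rcases eq_or_ne j 0 with rfl | hj
    · rw [poch_zero, poch_zero, one_mul]
      exact one_pos
    · exact mul_pos_of_neg_of_neg (poch_neg (by linarith) (by linarith) hj)
        (poch_neg (by linarith) (by linarith) hj)
  rw [gasperCoeff_gasperSeq_eq_left hμ hb hc hbc]
  exact mul_pos (gasperWeight_pos hμ n) (div_pos
    (binomSum_whippleTerm_pos_of_pos_right (by linarith) (by linarith) (by linarith) (by linarith)
      hpoch n) (mul_pos (poch_pos hb n) (poch_pos hc n)))

lemma gasperCoeff_gasperSeq_pos_of_le (ha : 0 < a) (hc : 0 < c)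
    (hbc : b + c = μ + a + 1 / 2) (haμ : 2 * a ≤ μ) (hcν : (μ + 1) / 2 ≤ c) (hab : a + 1 / 2 ≤ b)
    (h₁ : (b, c) ≠ (a + 1 / 2, 2 * a)) (h₂ : (b, c) ≠ (2 * a, a + 1 / 2)) (n : ℕ) :
    0 < gasperCoeff μ (gasperSeq μ a b c) n := by
  have hμ : 0 < μ := by linarith
  have hb : 0 < b := by linarith
  rw [gasperCoeff_gasperSeq_eq_right hμ hb hc hbc]
  refine mul_pos (gasperWeight_pos hμ n)
    (div_pos ?_ (mul_pos (poch_pos (half_pos hμ) n) (poch_pos hb n)))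
  rcases haμ.lt_or_eq with haμ | haμ
  · exact binomSum_whippleTerm_pos_of_pos_right ha.le (by linarith) (by linarith) hc
      (fun j => mul_pos (poch_pos (by linarith) j) (poch_pos (by linarith) j)) n
  · have hX : c ≠ (μ + 1) / 2 := fun h => h₂ (Prod.ext (by dsimp; linarith) (by dsimp; linarith))
    have hY : a + 1 / 2 ≠ b := fun h => h₁ (Prod.ext (by dsimp; linarith) (by dsimp; linarith))
    exact binomSum_whippleTerm_pos_of_pos_left ha (sub_pos.mpr (hcν.lt_of_ne hX.symm))
      (by linarith [hab.lt_of_ne hY]) hc (by linarith) (by linarith) n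

lemma binomSum_whippleTerm_one_nonneg (hμ : 0 < μ) (hc : 0 < c) (hbc : b + c = μ + a + 1 / 2)
    (hprod : a / 2 ≤ (b - a) * (c - a)) :
    0 ≤ binomSum (whippleTerm a (c - (μ + 1) / 2) (b - a - 1 / 2) (μ / 2 - a) (b - a) c) 1 := by
  have hfactor : (μ / 2 - a) * (b - a) + a * (c - (μ + 1) / 2) * (b - a - 1 / 2) / c =
      μ / 2 * ((b - a) * (c - a) - a / 2) / c := by
    obtain rfl : μ = b + c - a - 1 / 2 := by linarith
    field_simp
    ring
  rw [binomSum_whippleTerm_one, hfactor]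
  exact div_nonneg (mul_nonneg (half_pos hμ).le (sub_nonneg.mpr hprod)) hc.le

lemma oneF2_neg_pos_of_lt_add_half {y : ℝ} (hy : 0 < y) (ha : 0 < a) (hab : a < b) (hac : a < c)
    (hbc : b + c = μ + a + 1 / 2) (haμ : 2 * a ≤ μ) (hcν : (μ + 1) / 2 ≤ c) (hba : b < a + 1 / 2)
    (hprod : a / 2 ≤ (b - a) * (c - a)) (h₂ : (b, c) ≠ (2 * a, a + 1 / 2)) :
    0 < oneF2 a b c (-y) := by
  have hμ : 0 < μ := by linarith
  have hb : 0 < b := ha.trans hab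
  have hc : 0 < c := ha.trans hac
  have hfirst := binomSum_whippleTerm_one_nonneg hμ hc hbc hprod
  have hX : 0 ≤ c - (μ + 1) / 2 := sub_nonneg.mpr hcν
  have hXc : c - (μ + 1) / 2 ≤ c := by linarith
  have hY₁ : -1 < b - a - 1 / 2 := by linarith
  have hY₀ : b - a - 1 / 2 < 0 := by linarith
  have hQ : 0 < b - a := sub_pos.mpr hab
  have hP : 0 < μ / 2 - a := by
    refine lt_of_le_of_ne (by linarith) fun hP => h₂ ?_
    obtain rfl : c = 3 * a + 1 / 2 - b := by linarith
    have hmul : 0 ≤ (a + 1 / 2 - b) * (b - 2 * a) := by linear_combination hprod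
    have hb₂ : 0 ≤ b - 2 * a := (mul_nonneg_iff_of_pos_left (by linarith)).mp hmul
    exact Prod.ext (by dsimp; linarith) (by dsimp; linarith)
  have hden : ∀ n, 0 < poch (μ / 2) n * poch b n := fun n =>
    mul_pos (poch_pos (half_pos hμ) n) (poch_pos hb n)
  refine oneF2_neg_pos_of_gasperCoeff hμ ha hab.le hc hy (fun n => ?_)
    ((Filter.eventually_ne_atTop 1).mono fun n hn => ?_)
  all_goals rw [gasperCoeff_gasperSeq_eq_right hμ hb hc hbc]
  · exact mul_nonneg (gasperWeight_pos hμ n).le (div_nonneg (binomSum_whippleTerm_nonneg ha.le hX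
      hY₁ hY₀ hP hQ hc hac.le hXc hfirst n) (hden n).le)
  · exact mul_pos (gasperWeight_pos hμ n) (div_pos (binomSum_whippleTerm_pos ha.le hX
      hY₁ hY₀ hP hQ hc hac.le hXc hfirst hn) (hden n))

lemma oneF2_neg_pos_of_le {y : ℝ} (hy : 0 < y) (ha : 0 < a) (hab : a < b) (hac : a < c)
    (hbc : b + c = μ + a + 1 / 2) (haμ : 2 * a ≤ μ) (hcν : (μ + 1) / 2 ≤ c)
    (hprod : a / 2 ≤ (b - a) * (c - a)) (h₁ : (b, c) ≠ (a + 1 / 2, 2 * a))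
    (h₂ : (b, c) ≠ (2 * a, a + 1 / 2)) : 0 < oneF2 a b c (-y) := by
  rcases lt_or_ge b (a + 1 / 2) with hba | hba
  · exact oneF2_neg_pos_of_lt_add_half hy ha hab hac hbc haμ hcν hba hprod h₂
  · have hc : 0 < c := ha.trans hac
    have hpos := gasperCoeff_gasperSeq_pos_of_le ha hc hbc haμ hcν hba h₁ h₂
    exact oneF2_neg_pos_of_gasperCoeff (by linarith) ha hab.le hc hy (fun n => (hpos n).le)
      (Filter.Eventually.of_forall hpos)

lemma oneF2_swap (a b c z : ℝ) : oneF2 a b c z = oneF2 a c b z := by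
  simp only [oneF2, mul_right_comm]

end OneF2Positivity

theorem stmt4 (a b c : ℝ) (ha : 0 < a) (hb : 0 < b) (hc : 0 < c)
    (hba : a < b) (hca : a < c)
    (hmax : max (3 * a + 1 / 2 - b) (a + a / (2 * (b - a))) ≤ c)
    (hΛ1 : (b, c) ≠ (a + 1 / 2, 2 * a)) (hΛ2 : (b, c) ≠ (2 * a, a + 1 / 2)) :
    ∀ x : ℝ, 0 < x → 0 < oneF2 a b c (-x ^ 2 / 4) := by
  intro x hx
  obtain ⟨hsum, hdiv⟩ := max_le_iff.mp hmax
  have hprod : a / 2 ≤ (b - a) * (c - a) := by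
    rw [← div_le_iff₀' (sub_pos.mpr hba), div_div]
    linarith
  obtain ⟨μ, hbc⟩ : ∃ μ, b + c = μ + a + 1 / 2 := ⟨b + c - a - 1 / 2, by ring⟩
  have haμ : 2 * a ≤ μ := by linarith
  have hy : 0 < x ^ 2 / 4 := by positivity
  rw [neg_div]
  rcases le_or_gt ((μ + 1) / 2) c with hcν | hcν
  · exact oneF2_neg_pos_of_le hy ha hba hca hbc haμ hcν hprod hΛ1 hΛ2
  rcases le_or_gt ((μ + 1) / 2) b with hbν | hbν
  · rw [oneF2_swap]
    exact oneF2_neg_pos_of_le hy ha hca hba (by linarith) haμ hbν (by linarith)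
      (fun h => hΛ2 (Prod.swap_injective h)) (fun h => hΛ1 (Prod.swap_injective h))
  · have hpos := gasperCoeff_gasperSeq_pos_of_lt ha hb hc hbc haμ hbν hcν
    exact oneF2_neg_pos_of_gasperCoeff (by linarith) ha hba.le hc hy (fun n => (hpos n).le)
      (Filter.Eventually.of_forall hpos)
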